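/- Let ({1,…,n}, E, A, L) be a pairing structure with n = a + 2e and let K > 0. For λ > 0 define f̃_λ : ℝ^A → [0, ∞] by f̃_λ((k_m)_{m∈A}) := ∫_{[-K,K]^L} Π_{j=1}^n (λ + |S_j|)^{-1} d(k_p)_{p∈L}. Then there exists a constant C > 0, depending only on n and K, such that for all λ ∈ (0,1], ∫_{[-K,K]^A} f̃_λ((k_m)_{m∈A})² d(k_m)_{m∈A} ≤ C λ^{-n} (1 + log(1/λ))ⁿ. -/

import Mathlib

open MeasureTheory

/-- A pairing structure on `{1, …, n}` is encoded by an involution `σ` of `Fin n`: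
the free indices `A` are the fixed points, the set of left endpoints `L` is
`{j | j < σ j}`, and `(p, σ p)` with `p < σ p` are the pairs.  Given values
`kA` on `A` and `kL` on `L`, `combine σ hσ kA kL : Fin n → ℝ` is the vector `k̃` with
`k̃_j = kA_j` for `j ∈ A`, `k̃_j = kL_j` for `j ∈ L`, and `k̃_q = -kL_p` when `q = σ p`,
`p < q`. -/
noncomputable def combine {n : ℕ} (σ : Equiv.Perm (Fin n)) (hσ : ∀ j, σ (σ j) = j)
    (kA : {j : Fin n // σ j = j} → ℝ) (kL : {j : Fin n // j < σ j} → ℝ) :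
    Fin n → ℝ := fun j =>
  if h : σ j = j then kA ⟨j, h⟩
  else if h' : j < σ j then kL ⟨j, h'⟩
  else -kL ⟨σ j, by
    have h2 : σ j < j := lt_of_le_of_ne (not_lt.mp h') h
    rw [hσ j]; exact h2⟩

/-- The partial sums `S_j = k̃_1 + ⋯ + k̃_j`. -/
noncomputable def partialSum {n : ℕ} (k : Fin n → ℝ) (j : Fin n) : ℝ :=
  ∑ i ∈ Finset.Iic j, k i

/-!
The idea is to bound `∫ f̃²` by `sup f̃ · ∫ f̃`. If `m ∈ A ∪ L`, then `S_m` is `k_m` plus a function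
of the variables with smaller index, so the variables can be integrated out from the last one to
the first: integrating a factor `(λ + |S_m|)⁻¹` over `k_m` alone costs a logarithm `J`, uniformly in
the other variables, and every factor that is not used up in this way is at most `λ⁻¹`. With
`e = |L|` and `a = |A|`, using up the indices in `L` gives `sup f̃ ≤ λ^{-(n - e)} J^e`, and using up
all of `A ∪ L` gives `∫ f̃ ≤ λ^{-(n - a - e)} J^{a + e}`. Since `n = a + 2e`, the product is
`λ^{-n} J^n`.
-/

open Function
open scoped ENNReal

section LogarithmicIntegral

variable {l : ℝ}

theorem continuous_inv_add_abs (hl : 0 < l) : Continuous fun y : ℝ => (l + |y|)⁻¹ :=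
  Continuous.inv₀ (by fun_prop) fun y => by positivity

theorem integral_inv_add_abs (hl : 0 < l) {R : ℝ} (hR : 0 ≤ R) :
    ∫ y in (0 : ℝ)..R, (l + |y|)⁻¹ = Real.log ((l + R) / l) := by
  have h_abs : ∫ y in (0 : ℝ)..R, (l + |y|)⁻¹ = ∫ y in (0 : ℝ)..R, (l + y)⁻¹ := by
    refine intervalIntegral.integral_congr fun y hy => ?_
    rw [Set.uIcc_of_le hR] at hy
    simp only [abs_of_nonneg hy.1]
  rw [h_abs, intervalIntegral.integral_comp_add_left (fun y : ℝ => y⁻¹) l, add_zero,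
    integral_inv_of_pos hl (by linarith)]

theorem integral_inv_add_abs_symm (hl : 0 < l) {R : ℝ} (hR : 0 ≤ R) :
    ∫ y in (-R)..R, (l + |y|)⁻¹ = 2 * Real.log ((l + R) / l) := by
  have h_cont := continuous_inv_add_abs hl
  have h_neg : ∫ y in (-R)..0, (l + |y|)⁻¹ = ∫ y in (0 : ℝ)..R, (l + |y|)⁻¹ := by
    simpa using (intervalIntegral.integral_comp_neg (a := 0) (b := R)
      fun y : ℝ => (l + |y|)⁻¹).symm
  rw [← intervalIntegral.integral_add_adjacent_intervals (b := 0)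
    (h_cont.intervalIntegrable _ _) (h_cont.intervalIntegrable _ _), h_neg,
    integral_inv_add_abs hl hR, two_mul]

theorem setLIntegral_Icc_inv_add_abs_le (hl : l ∈ Set.Ioc (0 : ℝ) 1) :
    ∫⁻ y in Set.Icc (-1 : ℝ) 1, ENNReal.ofReal (l + |y|)⁻¹ ≤
      ENNReal.ofReal (2 * (1 + Real.log (1 / l))) := by
  obtain ⟨hl0, hl1⟩ := hl
  have h_cont := continuous_inv_add_abs hl0
  have h_log : Real.log ((l + 1) / l) ≤ 1 + Real.log (1 / l) := by
    have h_one : Real.log (l + 1) ≤ 1 := by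
      linarith [Real.log_le_sub_one_of_pos (show 0 < l + 1 by linarith)]
    rw [Real.log_div (by positivity) hl0.ne', one_div, Real.log_inv]
    linarith
  rw [← ofReal_integral_eq_lintegral_ofReal
    (h_cont.continuousOn.integrableOn_compact isCompact_Icc)
    (Filter.Eventually.of_forall fun y => by positivity),
    integral_Icc_eq_integral_Ioc, ← intervalIntegral.integral_of_le (by norm_num),
    integral_inv_add_abs_symm hl0 zero_le_one]
  gcongr

theorem setLIntegral_inv_add_abs_le (hl : l ∈ Set.Ioc (0 : ℝ) 1) (s : Set ℝ) (c : ℝ) :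
    ∫⁻ y in s, ENNReal.ofReal (l + |c + y|)⁻¹ ≤
      ENNReal.ofReal (2 * (1 + Real.log (1 / l))) + volume s := by
  let g : ℝ → ℝ≥0∞ := fun y => ENNReal.ofReal (l + |y|)⁻¹
  have h_split (y : ℝ) : g y ≤ (Set.Icc (-1) 1).indicator g y + 1 := by
    by_cases hy : y ∈ Set.Icc (-1) 1
    · rw [Set.indicator_of_mem hy]
      exact le_self_add
    · rw [Set.indicator_of_notMem hy, zero_add, ENNReal.ofReal_le_one]
      have h_abs : 1 < |y| := by rwa [Set.mem_Icc, ← abs_le, not_le] at hy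
      exact inv_le_one_of_one_le₀ (by linarith [hl.1])
  calc ∫⁻ y in s, g (c + y)
      ≤ ∫⁻ y in s, ((Set.Icc (-1) 1).indicator g (c + y) + 1) :=
        lintegral_mono fun y => h_split (c + y)
    _ = (∫⁻ y in s, (Set.Icc (-1) 1).indicator g (c + y)) + volume s := by
        rw [lintegral_add_right _ measurable_const, setLIntegral_one]
    _ ≤ (∫⁻ y, (Set.Icc (-1) 1).indicator g (c + y)) + volume s := by
        gcongr
        exact Measure.restrict_le_self
    _ ≤ ENNReal.ofReal (2 * (1 + Real.log (1 / l))) + volume s := by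
        rw [lintegral_add_left_eq_self, lintegral_indicator measurableSet_Icc]
        gcongr
        exact setLIntegral_Icc_inv_add_abs_le hl

theorem setLIntegral_Icc_inv_add_abs_add_le (hl : l ∈ Set.Ioc (0 : ℝ) 1) {K : ℝ} (hK : 0 ≤ K)
    (c : ℝ) :
    ∫⁻ y in Set.Icc (-K) K, ENNReal.ofReal (l + |c + y|)⁻¹ ≤
      ENNReal.ofReal (2 * (1 + K) * (1 + Real.log (1 / l))) := by
  have h_log : 0 ≤ Real.log (1 / l) := Real.log_nonneg (one_le_one_div hl.1 hl.2)
  refine (setLIntegral_inv_add_abs_le hl _ c).trans ?_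
  rw [Real.volume_Icc, ← ENNReal.ofReal_add (by positivity) (by linarith)]
  exact ENNReal.ofReal_le_ofReal (by nlinarith [mul_nonneg hK h_log])

end LogarithmicIntegral

section SuccessiveIntegration

variable {ι α : Type*} [DecidableEq ι] [LinearOrder α] {X : ι → Type*}
  [∀ i, MeasurableSpace (X i)] {μ : ∀ i, Measure (X i)} [∀ i, SigmaFinite (μ i)]
  {r : ι → α} {g : ι → (∀ i, X i) → ℝ≥0∞} {J : ℝ≥0∞}

theorem lmarginal_prod_le_pow_card (hr : Injective r) (hg : ∀ i, Measurable (g i))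
    (h_indep : ∀ i j, r i < r j → ∀ x t, g i (update x j t) = g i x)
    (hJ : ∀ i x, ∫⁻ t, g i (update x i t) ∂μ i ≤ J) (s : Finset ι) (x : ∀ i, X i) :
    lmarginal μ s (fun x => ∏ i ∈ s, g i x) x ≤ J ^ s.card := by
  induction s using Finset.induction_on_max_value r generalizing x with
  | empty => simp
  | insert a s ha h_max ih =>
    have h_last (x : ∀ i, X i) : ∫⁻ t, ∏ i ∈ insert a s, g i (update x a t) ∂μ a ≤
        J * ∏ i ∈ s, g i x := by
      have h_const (t : X a) : ∏ i ∈ s, g i (update x a t) = ∏ i ∈ s, g i x :=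
        Finset.prod_congr rfl fun i hi =>
          h_indep i a ((h_max i hi).lt_of_ne (hr.ne (ne_of_mem_of_not_mem hi ha))) x t
      simp_rw [Finset.prod_insert ha, h_const]
      rw [lintegral_mul_const _ (by fun_prop)]
      gcongr
      exact hJ a x
    rw [lmarginal_insert' _ (by fun_prop) ha, Finset.card_insert_of_notMem ha, pow_succ']
    calc lmarginal μ s (fun x => ∫⁻ t, ∏ i ∈ insert a s, g i (update x a t) ∂μ a) x
        ≤ lmarginal μ s (fun x => J * ∏ i ∈ s, g i x) x := lmarginal_mono h_last x
      _ = J * lmarginal μ s (fun x => ∏ i ∈ s, g i x) x :=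
        lintegral_const_mul _ (by fun_prop)
      _ ≤ J * J ^ s.card := by gcongr; exact ih x

theorem lintegral_prod_le_pow_card [Fintype ι] (hr : Injective r) (hg : ∀ i, Measurable (g i))
    (h_indep : ∀ i j, r i < r j → ∀ x t, g i (update x j t) = g i x)
    (hJ : ∀ i x, ∫⁻ t, g i (update x i t) ∂μ i ≤ J) :
    ∫⁻ x, ∏ i, g i x ∂Measure.pi μ ≤ J ^ Fintype.card ι := by
  rcases isEmpty_or_nonempty (∀ i, X i) with h_empty | ⟨⟨x⟩⟩
  · simp
  · rw [lintegral_eq_lmarginal_univ x]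
    exact lmarginal_prod_le_pow_card hr hg h_indep hJ Finset.univ x

end SuccessiveIntegration

theorem prod_le_pow_mul_prod_comp {ι κ M : Type*} [Fintype ι] [Fintype κ] [CommMonoid M]
    [PartialOrder M] [IsOrderedMonoid M] {r : ι → κ} (hr : Injective r) {f : κ → M} {b : M}
    (hf : ∀ k, f k ≤ b) :
    ∏ k, f k ≤ b ^ (Fintype.card κ - Fintype.card ι) * ∏ i, f (r i) := by
  classical
  rw [← Finset.prod_compl_mul_prod (Finset.univ.image r), Finset.prod_image hr.injOn,
    ← Finset.card_univ (α := ι), ← Finset.card_image_of_injective _ hr, ← Finset.card_compl]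
  exact mul_le_mul_left (Finset.prod_le_pow_card _ _ _ fun k _ => hf k) _

section PartialSum

variable {n : ℕ}

theorem partialSum_eq_sum_Iio_add (k : Fin n → ℝ) (j : Fin n) :
    partialSum k j = ∑ i ∈ Finset.Iio j, k i + k j := by
  rw [partialSum, ← Finset.Iio_insert, Finset.sum_insert (by simp), add_comm]

theorem partialSum_congr {k k' : Fin n → ℝ} {j : Fin n} (h : ∀ i ≤ j, k i = k' i) :
    partialSum k j = partialSum k' j :=
  Finset.sum_congr rfl fun i hi => h i (Finset.mem_Iic.1 hi)

/-- A parametrization `u` of vectors in `ℝⁿ` by independent variables `(x i)_{i ∈ ι}` in which the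
variable `x i` first enters as the entry with index `r i`. The vector `k̃` is of this form both in
the variables `k_m`, `m ∈ A ∪ L`, and, with `(k_m)_{m ∈ A}` frozen, in the variables `k_p`,
`p ∈ L`. -/
structure IsTriangular {ι : Type*} [DecidableEq ι] (r : ι → Fin n) (u : (ι → ℝ) → Fin n → ℝ) :
    Prop where
  injective : Injective r
  measurable : Measurable u
  apply_index : ∀ x i, u x (r i) = x i
  update_of_lt : ∀ x i t, ∀ j < r i, u (update x i t) j = u x j

namespace IsTriangular

variable {ι : Type*} [DecidableEq ι] {r : ι → Fin n} {u : (ι → ℝ) → Fin n → ℝ}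

theorem partialSum_update_of_lt (hu : IsTriangular r u) {j : Fin n} {i : ι} (hj : j < r i)
    (x : ι → ℝ) (t : ℝ) : partialSum (u (update x i t)) j = partialSum (u x) j :=
  partialSum_congr fun m hm => hu.update_of_lt x i t m (hm.trans_lt hj)

theorem partialSum_update_self (hu : IsTriangular r u) (i : ι) (x : ι → ℝ) (t : ℝ) :
    partialSum (u (update x i t)) (r i) = ∑ j ∈ Finset.Iio (r i), u x j + t := by
  rw [partialSum_eq_sum_Iio_add, hu.apply_index, update_self]
  congr 1
  exact Finset.sum_congr rfl fun j hj => hu.update_of_lt x i t j (Finset.mem_Iio.1 hj)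

theorem measurable_partialSum (hu : IsTriangular r u) (j : Fin n) :
    Measurable fun x => partialSum (u x) j :=
  Finset.measurable_fun_sum _ fun i _ => (measurable_pi_apply i).comp hu.measurable

theorem lintegral_prod_partialSum_le [Fintype ι] (hu : IsTriangular r u) {ν : Measure ℝ}
    [SigmaFinite ν] {g : ℝ → ℝ≥0∞} {b J : ℝ≥0∞} (hg : Measurable g) (hb : ∀ y, g y ≤ b)
    (hJ : ∀ c, ∫⁻ y, g (c + y) ∂ν ≤ J) :
    ∫⁻ x, ∏ j, g (partialSum (u x) j) ∂Measure.pi (fun _ : ι => ν) ≤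
      b ^ (n - Fintype.card ι) * J ^ Fintype.card ι := by
  have h_meas (j : Fin n) : Measurable fun x => g (partialSum (u x) j) :=
    hg.comp (hu.measurable_partialSum j)
  calc ∫⁻ x, ∏ j, g (partialSum (u x) j) ∂Measure.pi (fun _ : ι => ν)
      ≤ ∫⁻ x, b ^ (n - Fintype.card ι) * ∏ i, g (partialSum (u x) (r i))
          ∂Measure.pi (fun _ : ι => ν) := by
        refine lintegral_mono fun x => ?_
        simpa only [Fintype.card_fin] using
          prod_le_pow_mul_prod_comp hu.injective fun j => hb (partialSum (u x) j)
    _ = b ^ (n - Fintype.card ι) * ∫⁻ x, ∏ i, g (partialSum (u x) (r i))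
          ∂Measure.pi (fun _ : ι => ν) :=
        lintegral_const_mul _ (Finset.measurable_fun_prod _ fun i _ => h_meas (r i))
    _ ≤ b ^ (n - Fintype.card ι) * J ^ Fintype.card ι := by
        gcongr
        refine lintegral_prod_le_pow_card hu.injective (fun i => h_meas (r i)) ?_ ?_
        · intro i j hij x t
          rw [hu.partialSum_update_of_lt hij]
        · intro i x
          simpa only [hu.partialSum_update_self] using hJ _

end IsTriangular

end PartialSum

section Pairing

variable {n : ℕ} {σ : Equiv.Perm (Fin n)}

theorem card_fixed_add_two_mul_card_left (hσ : ∀ j, σ (σ j) = j) :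
    Fintype.card {j // σ j = j} + 2 * Fintype.card {j // j < σ j} = n := by
  have h_right : Fintype.card {j // j < σ j} = Fintype.card {j // σ j < j} :=
    Fintype.card_congr (σ.subtypeEquiv fun j => by rw [hσ])
  have h_one (j : Fin n) :
      ((if σ j = j then 1 else 0) + if j < σ j then 1 else 0) + (if σ j < j then 1 else 0) = 1 := by
    grind
  rw [two_mul, ← add_assoc]
  nth_rewrite 2 [h_right]
  simp only [Fintype.card_subtype, Finset.card_filter, ← Finset.sum_add_distrib, h_one,
    Finset.sum_const, Finset.card_univ, Fintype.card_fin, smul_eq_mul, mul_one]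

variable (hσ : ∀ j, σ (σ j) = j)

theorem combine_update_fixed_of_lt (kA : {j // σ j = j} → ℝ) (kL : {j // j < σ j} → ℝ)
    (m : {j // σ j = j}) (t : ℝ) {j : Fin n} (hj : j < m) :
    combine σ hσ (update kA m t) kL j = combine σ hσ kA kL j := by
  unfold combine
  split_ifs with h_fixed
  · exact update_of_ne (fun h => hj.ne (congrArg Subtype.val h)) _ _
  · rfl
  · rfl

theorem combine_update_left_of_lt (kA : {j // σ j = j} → ℝ) (kL : {j // j < σ j} → ℝ)
    (p : {j // j < σ j}) (t : ℝ) {j : Fin n} (hj : j < p) :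
    combine σ hσ kA (update kL p t) j = combine σ hσ kA kL j := by
  unfold combine
  split_ifs with h_fixed h_left
  · rfl
  · exact update_of_ne (fun h => hj.ne (congrArg Subtype.val h)) _ _
  · have h_partner : σ j < p := (not_lt.1 h_left).trans_lt hj
    rw [update_of_ne fun h => h_partner.ne (congrArg Subtype.val h)]

theorem measurable_combine :
    Measurable fun k : ({j // σ j = j} → ℝ) × ({j // j < σ j} → ℝ) => combine σ hσ k.1 k.2 := by
  refine measurable_pi_iff.2 fun j => ?_
  unfold combine
  split_ifs <;> fun_prop

theorem combine_fixed (kA : {j // σ j = j} → ℝ) (kL : {j // j < σ j} → ℝ) (m : {j // σ j = j}) :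
    combine σ hσ kA kL m = kA m :=
  dif_pos m.2

theorem combine_left (kA : {j // σ j = j} → ℝ) (kL : {j // j < σ j} → ℝ) (p : {j // j < σ j}) :
    combine σ hσ kA kL p = kL p :=
  (dif_neg p.2.ne').trans (dif_pos p.2)

theorem isTriangular_combine_left (kA : {j // σ j = j} → ℝ) :
    IsTriangular Subtype.val (combine σ hσ kA) where
  injective := Subtype.val_injective
  measurable := (measurable_combine hσ).comp measurable_prodMk_left
  apply_index := combine_left hσ kA
  update_of_lt kL p t _ hj := combine_update_left_of_lt hσ kA kL p t hj

theorem isTriangular_combine :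
    IsTriangular (Sum.elim Subtype.val Subtype.val)
      fun k : {j // σ j = j} ⊕ {j // j < σ j} → ℝ =>
        combine σ hσ (k ∘ Sum.inl) (k ∘ Sum.inr) where
  injective := Subtype.val_injective.sumElim Subtype.val_injective
    fun m p h => p.2.ne' (h ▸ m.2)
  measurable := (measurable_combine hσ).comp
    (MeasurableEquiv.sumPiEquivProdPi fun _ => ℝ).measurable
  apply_index k
    | .inl m => combine_fixed hσ _ _ m
    | .inr p => combine_left hσ _ _ p
  update_of_lt k
    | .inl m, t, _, hj => by
      simpa using combine_update_fixed_of_lt hσ (k ∘ Sum.inl) (k ∘ Sum.inr) m t hj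
    | .inr p, t, _, hj => by
      simpa using combine_update_left_of_lt hσ (k ∘ Sum.inl) (k ∘ Sum.inr) p t hj

variable {ν : Measure ℝ} [SigmaFinite ν] {g : ℝ → ℝ≥0∞} {b J : ℝ≥0∞}

theorem measurable_prod_partialSum_combine (hg : Measurable g) :
    Measurable fun k : ({j // σ j = j} → ℝ) × ({j // j < σ j} → ℝ) =>
      ∏ j, g (partialSum (combine σ hσ k.1 k.2) j) :=
  Finset.measurable_fun_prod _ fun _ _ => hg.comp <| Finset.measurable_fun_sum _ fun i _ =>
    (measurable_pi_apply i).comp (measurable_combine hσ)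

theorem lintegral_lintegral_prod_partialSum_combine_le (hg : Measurable g) (hb : ∀ y, g y ≤ b)
    (hJ : ∀ c, ∫⁻ y, g (c + y) ∂ν ≤ J) :
    ∫⁻ kA, ∫⁻ kL, ∏ j, g (partialSum (combine σ hσ kA kL) j)
        ∂Measure.pi (fun _ => ν) ∂Measure.pi (fun _ => ν) ≤
      b ^ (n - (Fintype.card {j // σ j = j} + Fintype.card {j // j < σ j})) *
        J ^ (Fintype.card {j // σ j = j} + Fintype.card {j // j < σ j}) := by
  have h_merge := measurePreserving_sumPiEquivProdPi
    fun _ : {j // σ j = j} ⊕ {j // j < σ j} => ν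
  rw [lintegral_lintegral (measurable_prod_partialSum_combine hσ hg).aemeasurable,
    ← h_merge.lintegral_comp (measurable_prod_partialSum_combine hσ hg), ← Fintype.card_sum]
  exact (isTriangular_combine hσ).lintegral_prod_partialSum_le hg hb hJ

theorem lintegral_sq_lintegral_prod_partialSum_combine_le (hg : Measurable g)
    (hb : ∀ y, g y ≤ b) (hJ : ∀ c, ∫⁻ y, g (c + y) ∂ν ≤ J) :
    ∫⁻ kA, (∫⁻ kL, ∏ j, g (partialSum (combine σ hσ kA kL) j) ∂Measure.pi (fun _ => ν)) ^ 2
        ∂Measure.pi (fun _ => ν) ≤ b ^ n * J ^ n := by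
  set a := Fintype.card {j // σ j = j}
  set e := Fintype.card {j // j < σ j}
  have h_card : a + 2 * e = n := card_fixed_add_two_mul_card_left hσ
  let f (kA : {j // σ j = j} → ℝ) : ℝ≥0∞ :=
    ∫⁻ kL, ∏ j, g (partialSum (combine σ hσ kA kL) j) ∂Measure.pi (fun _ => ν)
  have h_meas : Measurable f := (measurable_prod_partialSum_combine hσ hg).lintegral_prod_right'
  have h_sup (kA) : f kA ≤ b ^ (n - e) * J ^ e :=
    (isTriangular_combine_left hσ kA).lintegral_prod_partialSum_le hg hb hJ
  calc ∫⁻ kA, f kA ^ 2 ∂Measure.pi (fun _ => ν)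
      ≤ ∫⁻ kA, b ^ (n - e) * J ^ e * f kA ∂Measure.pi (fun _ => ν) := by
        refine lintegral_mono fun kA => ?_
        rw [sq]
        gcongr
        exact h_sup kA
    _ = b ^ (n - e) * J ^ e * ∫⁻ kA, f kA ∂Measure.pi (fun _ => ν) :=
        lintegral_const_mul _ h_meas
    _ ≤ b ^ (n - e) * J ^ e * (b ^ (n - (a + e)) * J ^ (a + e)) := by
        gcongr
        exact lintegral_lintegral_prod_partialSum_combine_le hσ hg hb hJ
    _ = b ^ n * J ^ n := by
        rw [mul_mul_mul_comm, ← pow_add, ← pow_add]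
        congr 2 <;> omega

theorem stmt17_general {K l : ℝ} (hK : 0 ≤ K) (hl : l ∈ Set.Ioc (0 : ℝ) 1) :
    ∫⁻ kA : {j : Fin n // σ j = j} → ℝ in Set.univ.pi (fun _ => Set.Icc (-K) K),
        (∫⁻ kL : {j : Fin n // j < σ j} → ℝ in Set.univ.pi (fun _ => Set.Icc (-K) K),
          ENNReal.ofReal (∏ j : Fin n, (l + |partialSum (combine σ hσ kA kL) j|)⁻¹)) ^ 2
      ≤ ENNReal.ofReal ((2 * (1 + K)) ^ n * (l ^ n)⁻¹ * (1 + Real.log (1 / l)) ^ n) := by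
  have hl0 : 0 < l := hl.1
  have h_log : 0 ≤ Real.log (1 / l) := Real.log_nonneg (one_le_one_div hl.1 hl.2)
  have h_meas : Measurable fun y : ℝ => ENNReal.ofReal (l + |y|)⁻¹ :=
    (continuous_inv_add_abs hl0).measurable.ennreal_ofReal
  have h_sup (y : ℝ) : ENNReal.ofReal (l + |y|)⁻¹ ≤ ENNReal.ofReal l⁻¹ :=
    ENNReal.ofReal_le_ofReal (inv_anti₀ hl0 (le_add_of_nonneg_right (abs_nonneg y)))
  have h_rhs : ENNReal.ofReal ((2 * (1 + K)) ^ n * (l ^ n)⁻¹ * (1 + Real.log (1 / l)) ^ n) =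
      ENNReal.ofReal l⁻¹ ^ n * ENNReal.ofReal (2 * (1 + K) * (1 + Real.log (1 / l))) ^ n := by
    rw [← ENNReal.ofReal_pow (by positivity), ← ENNReal.ofReal_pow (by positivity),
      ← ENNReal.ofReal_mul (by positivity), mul_pow _ (1 + Real.log (1 / l)), inv_pow]
    congr 1
    ring
  have h_prod (k : Fin n → ℝ) : ENNReal.ofReal (∏ j, (l + |partialSum k j|)⁻¹) =
      ∏ j, ENNReal.ofReal (l + |partialSum k j|)⁻¹ :=
    ENNReal.ofReal_prod_of_nonneg fun j _ => by positivity
  simp_rw [h_rhs, h_prod, volume_pi, Measure.restrict_pi_pi]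
  exact lintegral_sq_lintegral_prod_partialSum_combine_le hσ h_meas h_sup
    (setLIntegral_Icc_inv_add_abs_add_le hl hK)

end Pairing

/-- Let a pairing structure on `{1,…,n}` and `K > 0` be given. For `λ > 0`
let `f̃_λ((k_m)_{m∈A}) = ∫_{[-K,K]^L} Π_{j=1}^n (λ+|S_j|)⁻¹ d(k_p)_{p∈L}`. Then there is a
constant `C > 0`, depending only on `n` and `K`, such that for all `λ ∈ (0,1]`,
`∫_{[-K,K]^A} f̃_λ² d(k_m)_{m∈A} ≤ C λ^{-n} (1 + log(1/λ))ⁿ`. -/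
theorem stmt17 (n : ℕ) (σ : Equiv.Perm (Fin n)) (hσ : ∀ j, σ (σ j) = j)
    (K : ℝ) (hK : 0 < K) :
    ∃ C > (0:ℝ), ∀ l ∈ Set.Ioc (0:ℝ) 1,
      ∫⁻ kA : {j : Fin n // σ j = j} → ℝ in
          Set.univ.pi (fun _ => Set.Icc (-K) K),
        (∫⁻ kL : {j : Fin n // j < σ j} → ℝ in
            Set.univ.pi (fun _ => Set.Icc (-K) K),
          ENNReal.ofReal
            (∏ j : Fin n, (l + |partialSum (combine σ hσ kA kL) j|)⁻¹)) ^ 2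
      ≤ ENNReal.ofReal (C * (l ^ n)⁻¹ * (1 + Real.log (1 / l)) ^ n) :=
  ⟨(2 * (1 + K)) ^ n, by positivity, fun l hl => stmt17_general hσ hK.le hl⟩
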